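/- For any nonnegative n×n matrix A, the arithmetic mean of all entries times n satisfies: min over B ∈ Ω(A) of ρ(B) ≤ (1/n)·∑ᵢ∑ⱼ a_{i,j} ≤ max over B ∈ Ω(A) of ρ(B). -/

import Mathlib

open Matrix Finset

/-- The Perron root: the largest nonnegative real eigenvalue of a matrix. -/
noncomputable def perronRoot {n : ℕ} (A : Matrix (Fin n) (Fin n) ℝ) : ℝ :=
  sSup {r : ℝ | 0 ≤ r ∧ ∃ v : Fin n → ℝ, v ≠ 0 ∧ A.mulVec v = r • v}

/-- Ω(A): matrices obtained by permuting the entries within each row of A independently. -/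
def Omega {n : ℕ} (A : Matrix (Fin n) (Fin n) ℝ) : Set (Matrix (Fin n) (Fin n) ℝ) :=
  {B | ∀ i, ∃ φ : Equiv.Perm (Fin n), ∀ j, B i j = A i (φ j)}

/-- Irreducibility: the directed graph of the matrix is strongly connected. -/
def Irred {n : ℕ} (A : Matrix (Fin n) (Fin n) ℝ) : Prop :=
  ∀ i j, ∃ m : ℕ, 0 < m ∧ 0 < (A ^ m) i j

/-!
Let `s` be the vector of row sums of `A` and `c` their mean. By Chebyshev's sum inequality, a
matrix `B` obtained by sorting each row of `A` like `s` satisfies `c s ≤ B s`, and one obtained by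
sorting each row oppositely to `s` satisfies `B s ≤ c s`. The Collatz–Wielandt bounds with test
vector `s` turn these inequalities into `c ≤ ρ(B)` and `ρ(B) ≤ c`; the upper bound tolerates zeros
of `s` because the corresponding rows of `B` vanish.

The lower bound rests on the existence of a Perron eigenvector. Let `r` be the supremum of all `t`
with `t x ≤ B x` for some nonzero `x ≥ 0`. If `r - B` were invertible, `v = (r - B)⁻¹ 1` would be
the limit of the nonnegative vectors `(t - B)⁻¹ 1` as `t ↓ r`, so that `B v = r v - 1` with `v > 0`;
such a `v` pushes the supremum strictly below `r`.
-/

section MulVec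

variable {m ι R : Type*} [Fintype ι]

theorem mulVec_monotone [Semiring R] [PartialOrder R] [IsOrderedRing R] {B : Matrix m ι R}
    (hB : ∀ i j, 0 ≤ B i j) : Monotone (B *ᵥ ·) :=
  fun _ _ h i => dotProduct_le_dotProduct_of_nonneg_left h (hB i)

theorem mulVec_nonneg [Semiring R] [PartialOrder R] [IsOrderedRing R] {B : Matrix m ι R}
    (hB : ∀ i j, 0 ≤ B i j) {x : ι → R} (hx : 0 ≤ x) : 0 ≤ B *ᵥ x :=
  fun i => dotProduct_nonneg_of_nonneg (hB i) hx

theorem abs_mulVec_le [Ring R] [Lattice R] [IsOrderedRing R] {B : Matrix m ι R}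
    (hB : ∀ i j, 0 ≤ B i j) (v : ι → R) : |B *ᵥ v| ≤ B *ᵥ |v| :=
  sup_le (mulVec_monotone hB (le_abs_self v))
    (mulVec_neg v B ▸ mulVec_monotone hB (neg_le_abs v))

theorem le_of_smul_le_mulVec_of_mulVec_le_smul [Field R] [LinearOrder R] [IsStrictOrderedRing R]
    {B : Matrix ι ι R} (hB : ∀ i j, 0 ≤ B i j) {c t : R} {x y : ι → R}
    (hx : 0 ≤ x) (hBx : B *ᵥ x ≤ c • x) (hy : 0 ≤ y) (hy0 : y ≠ 0) (hBy : t • y ≤ B *ᵥ y)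
    (hsupp : Function.support y ⊆ Function.support x) : t ≤ c := by
  have hxpos : ∀ {i}, y i ≠ 0 → 0 < x i := fun hi => (hx _).lt_of_ne' (hsupp hi)
  obtain ⟨k, hk⟩ := Function.ne_iff.1 hy0
  obtain ⟨i, -, hi⟩ := exists_max_image univ (fun i => y i / x i) ⟨k, mem_univ k⟩
  set d := y i / x i with hd
  have hdpos : 0 < d :=
    (div_pos ((hy k).lt_of_ne' hk) (hxpos hk)).trans_le (hi k (mem_univ k))
  have hyi : y i ≠ 0 := fun h => hdpos.ne' (by rw [hd, h, zero_div])
  have hyi_eq : y i = d * x i := (div_mul_cancel₀ _ (hxpos hyi).ne').symm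
  have hyd : y ≤ d • x := fun j => by
    by_cases hj : y j = 0
    · rw [hj]
      exact mul_nonneg hdpos.le (hx j)
    · exact (div_le_iff₀ (hxpos hj)).1 (hi j (mem_univ j))
  refine le_of_mul_le_mul_right ?_ ((hy i).lt_of_ne' hyi)
  calc t * y i ≤ (B *ᵥ y) i := hBy i
    _ ≤ (B *ᵥ (d • x)) i := mulVec_monotone hB hyd i
    _ = d * (B *ᵥ x) i := by rw [mulVec_smul, Pi.smul_apply, smul_eq_mul]
    _ ≤ d * (c * x i) := mul_le_mul_of_nonneg_left (hBx i) hdpos.le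
    _ = c * y i := by rw [hyi_eq, mul_left_comm]

theorem mulVec_inv_mulVec [CommRing R] [DecidableEq ι] {B : Matrix ι ι R} {t : R}
    (ht : IsUnit (t • 1 - B).det) (w : ι → R) :
    B *ᵥ ((t • 1 - B)⁻¹ *ᵥ w) = t • ((t • 1 - B)⁻¹ *ᵥ w) - w := by
  have h : (t • 1 - B) *ᵥ ((t • 1 - B)⁻¹ *ᵥ w) = w := by
    rw [mulVec_mulVec, mul_nonsing_inv _ ht, one_mulVec]
  rw [sub_mulVec, smul_mulVec, one_mulVec] at h
  exact eq_sub_of_add_eq' (sub_eq_iff_eq_add.1 h).symm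

end MulVec

section CollatzWielandt

variable {ι : Type*} [Fintype ι] {B : Matrix ι ι ℝ} {c t : ℝ}

/-- The Collatz–Wielandt set of `B`: all `t` admitting a nonzero vector `x ≥ 0` with `t x ≤ B x`.
For a nonnegative `B` its supremum is the Perron root. -/
def subeigenvalues (B : Matrix ι ι ℝ) : Set ℝ :=
  {t | ∃ x : ι → ℝ, 0 ≤ x ∧ x ≠ 0 ∧ t • x ≤ B *ᵥ x}

theorem mem_subeigenvalues_of_mulVec_eq (hB : ∀ i j, 0 ≤ B i j) (ht : 0 ≤ t) {v : ι → ℝ}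
    (hv : v ≠ 0) (hBv : B *ᵥ v = t • v) : t ∈ subeigenvalues B := by
  refine ⟨|v|, abs_nonneg v, fun h => hv (funext fun i => abs_eq_zero.1 (congrFun h i)), ?_⟩
  calc t • |v| = |B *ᵥ v| := funext fun i => by simp [hBv, abs_mul, abs_of_nonneg ht]
    _ ≤ B *ᵥ |v| := abs_mulVec_le hB v

theorem zero_mem_subeigenvalues [Nonempty ι] (hB : ∀ i j, 0 ≤ B i j) : 0 ∈ subeigenvalues B :=
  ⟨1, zero_le_one, one_ne_zero, by simpa using mulVec_nonneg hB zero_le_one⟩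

theorem mem_upperBounds_subeigenvalues (hB : ∀ i j, 0 ≤ B i j) {x : ι → ℝ}
    (hx : ∀ i, 0 < x i) (hBx : B *ᵥ x ≤ c • x) : c ∈ upperBounds (subeigenvalues B) :=
  fun _ ⟨_, hy, hy0, hBy⟩ => le_of_smul_le_mulVec_of_mulVec_le_smul hB (fun i => (hx i).le) hBx
    hy hy0 hBy fun i _ => (hx i).ne'

theorem bddAbove_subeigenvalues (hB : ∀ i j, 0 ≤ B i j) : BddAbove (subeigenvalues B) := by
  refine ⟨∑ i, ∑ j, B i j, mem_upperBounds_subeigenvalues hB (x := 1) (fun _ => one_pos) ?_⟩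
  intro i
  simpa [mulVec, dotProduct] using single_le_sum (f := fun i => ∑ j, B i j)
    (fun i _ => sum_nonneg fun j _ => hB i j) (mem_univ i)

theorem sSup_subeigenvalues_lt [Nonempty ι] (hB : ∀ i j, 0 ≤ B i j) {x : ι → ℝ}
    (hx : ∀ i, 0 < x i) (hBx : ∀ i, (B *ᵥ x) i < c * x i) : sSup (subeigenvalues B) < c := by
  let q := univ.sup' univ_nonempty fun i => (B *ᵥ x) i / x i
  have hBq : B *ᵥ x ≤ q • x := fun i =>
    (div_le_iff₀ (hx i)).1 (le_sup' (fun i => (B *ᵥ x) i / x i) (mem_univ i))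
  calc sSup (subeigenvalues B) ≤ q :=
        csSup_le ⟨0, zero_mem_subeigenvalues hB⟩ (mem_upperBounds_subeigenvalues hB hx hBq)
    _ < c := (sup'_lt_iff _).2 fun i _ => (div_lt_iff₀ (hx i)).2 (hBx i)

theorem nonneg_of_mulVec_le_smul (hB : ∀ i j, 0 ≤ B i j) (ht : t ∉ subeigenvalues B)
    {v : ι → ℝ} (hBv : B *ᵥ v ≤ t • v) : 0 ≤ v := by
  -- Otherwise the negative part of `v` is a test vector for `t`.
  by_contra hv
  refine ht ⟨v⁻, negPart_nonneg v, fun h => hv (negPart_eq_zero.1 h), fun i => ?_⟩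
  rcases le_total 0 (v i) with hi | hi
  · have hneg : v⁻ i = 0 := by simpa using hi
    simpa [hneg] using mulVec_nonneg hB (negPart_nonneg v) i
  · have hneg : v⁻ i = -v i := by simpa using hi
    calc t * v⁻ i = -(t * v i) := by rw [hneg, mul_neg]
      _ ≤ -(B *ᵥ v) i := neg_le_neg (hBv i)
      _ = (B *ᵥ (-v)) i := by rw [mulVec_neg, Pi.neg_apply]
      _ ≤ (B *ᵥ v⁻) i := mulVec_monotone hB (neg_le_negPart v) i

section Resolvent

variable [DecidableEq ι]

theorem inv_mulVec_nonneg (hB : ∀ i j, 0 ≤ B i j) (ht : t ∉ subeigenvalues B)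
    (hdet : (t • 1 - B).det ≠ 0) {w : ι → ℝ} (hw : 0 ≤ w) : 0 ≤ (t • 1 - B)⁻¹ *ᵥ w :=
  nonneg_of_mulVec_le_smul hB ht
    ((mulVec_inv_mulVec hdet.isUnit w).trans_le (sub_le_self _ hw))

theorem inv_sSup_mulVec_nonneg (hB : ∀ i j, 0 ≤ B i j)
    (hdet : (sSup (subeigenvalues B) • 1 - B).det ≠ 0) {w : ι → ℝ} (hw : 0 ≤ w) :
    0 ≤ (sSup (subeigenvalues B) • 1 - B)⁻¹ *ᵥ w := by
  set r := sSup (subeigenvalues B)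
  have hpencil : Continuous fun t : ℝ => t • (1 : Matrix ι ι ℝ) - B := by fun_prop
  have hinv : ContinuousAt (fun t : ℝ => (t • 1 - B)⁻¹) r :=
    (continuousAt_matrix_inv _ (by simpa using continuousAt_inv₀ hdet)).comp
      (f := fun t : ℝ => t • (1 : Matrix ι ι ℝ) - B) hpencil.continuousAt
  have hlim : ContinuousAt (fun t : ℝ => (t • 1 - B)⁻¹ *ᵥ w) r :=
    (continuous_id.matrix_mulVec continuous_const).continuousAt.comp hinv
  refine ge_of_tendsto (hlim.mono_left (nhdsWithin_le_nhds (s := Set.Ioi r))) ?_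
  filter_upwards [self_mem_nhdsWithin,
    nhdsWithin_le_nhds (hpencil.matrix_det.continuousAt.eventually_ne hdet)] with t hrt ht
  exact inv_mulVec_nonneg hB (notMem_of_csSup_lt hrt (bddAbove_subeigenvalues hB)) ht hw

end Resolvent

theorem exists_mulVec_eq_sSup_subeigenvalues_smul [Nonempty ι] (hB : ∀ i j, 0 ≤ B i j) :
    ∃ v ≠ 0, B *ᵥ v = sSup (subeigenvalues B) • v := by
  classical
  set r := sSup (subeigenvalues B) with hr
  suffices hdet : (r • 1 - B).det = 0 by
    obtain ⟨v, hv, hBv⟩ := exists_mulVec_eq_zero_iff.2 hdet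
    rw [sub_mulVec, smul_mulVec, one_mulVec, sub_eq_zero] at hBv
    exact ⟨v, hv, hBv.symm⟩
  by_contra hdet
  set v := (r • 1 - B)⁻¹ *ᵥ 1
  have hv : 0 ≤ v := inv_sSup_mulVec_nonneg hB hdet zero_le_one
  have hBv (i : ι) : (B *ᵥ v) i = r * v i - 1 := congrFun (mulVec_inv_mulVec (Ne.isUnit hdet) 1) i
  have hvpos (i : ι) : 0 < v i := by
    refine (hv i).lt_of_ne' fun hi => ?_
    have hBvi : 0 ≤ (B *ᵥ v) i := mulVec_nonneg hB hv i
    rw [hBv, hi, Pi.zero_apply] at hBvi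
    linarith
  exact (sSup_subeigenvalues_lt hB hvpos fun i => (hBv i).trans_lt (sub_one_lt _)).ne hr.symm

end CollatzWielandt

section PerronRoot

variable {n : ℕ} {B : Matrix (Fin n) (Fin n) ℝ} {c : ℝ}

theorem perronRoot_nonneg (B : Matrix (Fin n) (Fin n) ℝ) : 0 ≤ perronRoot B :=
  Real.sSup_nonneg fun _ h => h.1

theorem perronRoot_eq_sSup_subeigenvalues [NeZero n] (hB : ∀ i j, 0 ≤ B i j) :
    perronRoot B = sSup (subeigenvalues B) := by
  have hnonneg : 0 ≤ sSup (subeigenvalues B) :=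
    le_csSup (bddAbove_subeigenvalues hB) (zero_mem_subeigenvalues hB)
  refine IsGreatest.csSup_eq ⟨⟨hnonneg, exists_mulVec_eq_sSup_subeigenvalues_smul hB⟩, ?_⟩
  rintro t ⟨ht, v, hv, hBv⟩
  exact le_csSup (bddAbove_subeigenvalues hB) (mem_subeigenvalues_of_mulVec_eq hB ht hv hBv)

theorem le_perronRoot_of_smul_le_mulVec [NeZero n] (hB : ∀ i j, 0 ≤ B i j) {x : Fin n → ℝ}
    (hx : 0 ≤ x) (hx0 : x ≠ 0) (hBx : c • x ≤ B *ᵥ x) : c ≤ perronRoot B :=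
  perronRoot_eq_sSup_subeigenvalues hB ▸
    le_csSup (bddAbove_subeigenvalues hB) ⟨x, hx, hx0, hBx⟩

theorem perronRoot_le_of_mulVec_le_smul (hB : ∀ i j, 0 ≤ B i j) {x : Fin n → ℝ} (hx : 0 ≤ x)
    (hrow : ∀ i, x i = 0 → B i = 0) (hc : 0 ≤ c) (hBx : B *ᵥ x ≤ c • x) :
    perronRoot B ≤ c := by
  refine Real.sSup_le ?_ hc
  rintro t ⟨ht, v, hv, hBv⟩
  rcases ht.eq_or_lt with rfl | htpos
  · exact hc
  obtain ⟨y, hy, hy0, hBy⟩ := mem_subeigenvalues_of_mulVec_eq hB ht hv hBv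
  refine le_of_smul_le_mulVec_of_mulVec_le_smul hB hx hBx hy hy0 hBy fun i hyi hxi => hyi ?_
  have hyi_le : t * y i ≤ 0 := by simpa [mulVec, hrow i hxi] using hBy i
  exact (nonpos_of_mul_nonpos_right hyi_le htpos).antisymm (hy i)

end PerronRoot

section RowPermutations

theorem exists_perm_monovary {n : ℕ} {α β : Type*} [LinearOrder α] [LinearOrder β]
    (f : Fin n → α) (g : Fin n → β) : ∃ σ : Equiv.Perm (Fin n), Monovary (f ∘ σ) g := by
  refine ⟨(Tuple.sort g).symm.trans (Tuple.sort f), ?_⟩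
  have h := ((Tuple.monotone_sort f).monovary (Tuple.monotone_sort g)).comp_right
    (Tuple.sort g).symm
  simpa [Function.comp_def] using h

theorem exists_perm_antivary {n : ℕ} {α β : Type*} [LinearOrder α] [LinearOrder β]
    (f : Fin n → α) (g : Fin n → β) : ∃ σ : Equiv.Perm (Fin n), Antivary (f ∘ σ) g :=
  (exists_perm_monovary f (OrderDual.toDual ∘ g)).imp fun _ => monovary_toDual_right.1

variable {n : ℕ} {A B : Matrix (Fin n) (Fin n) ℝ}

theorem finite_Omega (A : Matrix (Fin n) (Fin n) ℝ) : (Omega A).Finite := by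
  refine (Set.finite_range fun σ : Fin n → Equiv.Perm (Fin n) =>
    Matrix.of fun i j => A i (σ i j)).subset fun B hB => ?_
  choose σ hσ using hB
  exact ⟨σ, Matrix.ext fun i j => (hσ i j).symm⟩

theorem nonneg_of_mem_Omega (hA : ∀ i j, 0 ≤ A i j) (hB : B ∈ Omega A) (i j : Fin n) :
    0 ≤ B i j := by
  obtain ⟨φ, hφ⟩ := hB i
  exact hφ j ▸ hA i (φ j)

theorem row_eq_zero_of_mem_Omega (hA : ∀ i j, 0 ≤ A i j) (hB : B ∈ Omega A) {i : Fin n}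
    (hi : ∑ j, A i j = 0) : B i = 0 := by
  obtain ⟨φ, hφ⟩ := hB i
  have hAi := (sum_eq_zero_iff_of_nonneg fun j _ => hA i j).1 hi
  exact funext fun j => (hφ j).trans (hAi (φ j) (mem_univ _))

theorem exists_mem_Omega_le_mulVec (A : Matrix (Fin n) (Fin n) ℝ) (x : Fin n → ℝ) :
    ∃ B ∈ Omega A, ∀ i, (∑ j, A i j) * ∑ j, x j ≤ n * (B *ᵥ x) i := by
  choose σ hσ using fun i => exists_perm_monovary (A i) x
  refine ⟨Matrix.of fun i j => A i (σ i j), fun i => ⟨σ i, fun _ => rfl⟩, fun i => ?_⟩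
  simpa [mulVec, dotProduct, Equiv.sum_comp] using (hσ i).sum_mul_sum_le_card_mul_sum

theorem exists_mem_Omega_mulVec_le (A : Matrix (Fin n) (Fin n) ℝ) (x : Fin n → ℝ) :
    ∃ B ∈ Omega A, ∀ i, n * (B *ᵥ x) i ≤ (∑ j, A i j) * ∑ j, x j := by
  choose σ hσ using fun i => exists_perm_antivary (A i) x
  refine ⟨Matrix.of fun i j => A i (σ i j), fun i => ⟨σ i, fun _ => rfl⟩, fun i => ?_⟩
  simpa [mulVec, dotProduct, Equiv.sum_comp] using (hσ i).card_mul_sum_le_sum_mul_sum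

theorem exists_mem_Omega_le_perronRoot [NeZero n] (hA : ∀ i j, 0 ≤ A i j) :
    ∃ B ∈ Omega A, (∑ i, ∑ j, A i j) / n ≤ perronRoot B := by
  have hn : (0 : ℝ) < n := Nat.cast_pos.2 (NeZero.pos n)
  let s : Fin n → ℝ := fun i => ∑ j, A i j
  have hs : 0 ≤ s := fun i => sum_nonneg fun j _ => hA i j
  obtain ⟨B, hB, hBs⟩ := exists_mem_Omega_le_mulVec A s
  refine ⟨B, hB, ?_⟩
  by_cases hs0 : s = 0
  · have hsum : ∑ i, ∑ j, A i j = 0 := sum_eq_zero fun i _ => congrFun hs0 i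
    simpa [hsum] using perronRoot_nonneg B
  refine le_perronRoot_of_smul_le_mulVec (nonneg_of_mem_Omega hA hB) hs hs0 fun i => ?_
  rw [Pi.smul_apply, smul_eq_mul, div_mul_eq_mul_div, div_le_iff₀' hn, mul_comm]
  exact hBs i

theorem exists_mem_Omega_perronRoot_le [NeZero n] (hA : ∀ i j, 0 ≤ A i j) :
    ∃ B ∈ Omega A, perronRoot B ≤ (∑ i, ∑ j, A i j) / n := by
  have hn : (0 : ℝ) < n := Nat.cast_pos.2 (NeZero.pos n)
  let s : Fin n → ℝ := fun i => ∑ j, A i j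
  have hs : 0 ≤ s := fun i => sum_nonneg fun j _ => hA i j
  obtain ⟨B, hB, hBs⟩ := exists_mem_Omega_mulVec_le A s
  refine ⟨B, hB, perronRoot_le_of_mulVec_le_smul (nonneg_of_mem_Omega hA hB) hs
    (fun i hi => row_eq_zero_of_mem_Omega hA hB hi)
    (div_nonneg (sum_nonneg fun i _ => hs i) hn.le) fun i => ?_⟩
  rw [Pi.smul_apply, smul_eq_mul, div_mul_eq_mul_div, le_div_iff₀' hn, mul_comm _ (s i)]
  exact hBs i

end RowPermutations

theorem stmt11 {n : ℕ} (hn : 0 < n) (A : Matrix (Fin n) (Fin n) ℝ)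
    (hA : ∀ i j, 0 ≤ A i j) :
    sInf (perronRoot '' Omega A) ≤ (∑ i, ∑ j, A i j) / n ∧
      (∑ i, ∑ j, A i j) / n ≤ sSup (perronRoot '' Omega A) := by
  have : NeZero n := ⟨hn.ne'⟩
  have hfin : (perronRoot '' Omega A).Finite := (finite_Omega A).image perronRoot
  obtain ⟨B, hB, hle⟩ := exists_mem_Omega_perronRoot_le hA
  obtain ⟨C, hC, hge⟩ := exists_mem_Omega_le_perronRoot hA
  exact ⟨csInf_le_of_le hfin.bddBelow (Set.mem_image_of_mem _ hB) hle,
    le_csSup_of_le hfin.bddAbove (Set.mem_image_of_mem _ hC) hge⟩
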